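/- Let K be a d-dimensional maximal lattice-free set in ℝ^d and let r be the dimension of the recession cone rec(K). Then rec(K) is a linear subspace of ℝ^d that is spanned by r vectors from ℤ^d. -/

import Mathlib

open Pointwise

/-- The standard integer lattice `ℤ^d` viewed as a subset of `ℝ^d`. -/
def intLattice (d : ℕ) : Set (Fin d → ℝ) :=
  Set.range (fun z : Fin d → ℤ => fun i => (z i : ℝ))

/-- A set `K ⊆ ℝ^d` is lattice-free if it is closed, convex, and its interior
contains no point of `ℤ^d`. -/
def IsLatticeFree (d : ℕ) (K : Set (Fin d → ℝ)) : Prop :=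
  IsClosed K ∧ Convex ℝ K ∧ interior K ∩ intLattice d = ∅

/-- A lattice-free set is maximal if it is not properly contained in another
lattice-free set. -/
def IsMaxLatticeFree (d : ℕ) (K : Set (Fin d → ℝ)) : Prop :=
  IsLatticeFree d K ∧ ∀ K' : Set (Fin d → ℝ), IsLatticeFree d K' → K ⊆ K' → K' = K

/-- The recession cone of `K`: all vectors `u` with `K + u ⊆ K`. -/
def recCone (d : ℕ) (K : Set (Fin d → ℝ)) : Set (Fin d → ℝ) :=
  {u | ∀ x ∈ K, x + u ∈ K}

/-- A polyhedron: an intersection of finitely many closed halfspaces. -/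
def IsPolyhedron (d : ℕ) (K : Set (Fin d → ℝ)) : Prop :=
  ∃ (n : ℕ) (a : Fin n → (Fin d → ℝ)) (b : Fin n → ℝ),
    K = {x | ∀ i, ∑ j, a i j * x j ≤ b i}

/-- A polytope: the convex hull of finitely many points. -/
def IsPolytope (d : ℕ) (K : Set (Fin d → ℝ)) : Prop :=
  ∃ s : Finset (Fin d → ℝ), K = convexHull ℝ (s : Set (Fin d → ℝ))

/-- A facet of a `d`-dimensional convex set `K ⊆ ℝ^d`: a nonempty convex
(extreme) face of dimension `d - 1`. -/
def IsFacet (d : ℕ) (K F : Set (Fin d → ℝ)) : Prop :=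
  F.Nonempty ∧ IsExtreme ℝ K F ∧ Convex ℝ F ∧
    Module.finrank ℝ (affineSpan ℝ F).direction + 1 = d

/-!
Let `Λ` be a subgroup spanning `E`, let `K` be a maximal closed convex set whose interior avoids
`Λ`, let `R` be its recession cone and `H` the closure of the group generated by `Λ` and `R`.

The open set `interior K` avoids `Λ - R`, hence also the closure of `Λ - R`. As `E ⧸ Λ` is compact,
the closure of the submonoid `Λ - R` is a group, so it equals `H`.

Let `V` be the largest linear subspace contained in `H`. Then `interior K + V` avoids `Λ`, so
`V ⊆ R` by maximality, while `R ⊆ V` because `R` is a cone and `H` is a group. Thus `R = V`.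

A closed group that contains no line is discrete, so `Λ` has discrete image in `E ⧸ V`. Lifting a
basis of that image to `Λ` gives a linear projection of `E` onto `V` that maps `Λ` into `Λ ∩ V`;
since `Λ` spans `E`, `Λ ∩ V` spans `V`.
-/

section CocompactSubgroup

theorem compactSpace_quotient_of_span_eq_top {E : Type*} [NormedAddCommGroup E] [NormedSpace ℝ E]
    [FiniteDimensional ℝ E] {Λ : AddSubgroup E} (hΛ : Submodule.span ℝ (Λ : Set E) = ⊤) :
    CompactSpace (E ⧸ Λ) := by
  have : ProperSpace E := FiniteDimensional.proper_real E
  let b := Module.Basis.ofSpan hΛ.ge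
  have hb : ∀ x ∈ Submodule.span ℤ (Set.range b), x ∈ Λ := fun x hx =>
    Submodule.span_le (p := Λ.toIntSubmodule) |>.2 (Module.Basis.ofSpan_subset hΛ.ge) hx
  have hcompact : IsCompact (closure (ZSpan.fundamentalDomain b)) :=
    (ZSpan.fundamentalDomain_isBounded b).isCompact_closure
  refine isCompact_univ_iff.1 (hcompact.image QuotientAddGroup.continuous_mk |>.of_isClosed_subset
    isClosed_univ fun y _ => ?_)
  obtain ⟨x, rfl⟩ := QuotientAddGroup.mk_surjective y
  refine ⟨ZSpan.fract b x, subset_closure (ZSpan.fract_mem_fundamentalDomain b x), ?_⟩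
  rw [QuotientAddGroup.eq, ZSpan.fract_apply, neg_sub, sub_add_cancel]
  exact hb _ (ZSpan.floor b x).2

theorem closure_addSubgroupClosure_eq_of_compactSpace_quotient {G : Type*} [AddCommGroup G]
    [TopologicalSpace G] [IsTopologicalAddGroup G] {Λ : AddSubgroup G} [CompactSpace (G ⧸ Λ)]
    {M : AddSubmonoid G} (hM : Λ.toAddSubmonoid ≤ M) :
    closure (AddSubgroup.closure (M : Set G) : Set G) = closure M := by
  refine subset_antisymm (fun x hx => ?_) (closure_mono AddSubgroup.subset_closure)
  let π := QuotientAddGroup.mk' Λ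
  have hsaturated : π ⁻¹' (π '' M) = M := by
    refine subset_antisymm ?_ (Set.subset_preimage_image π M)
    rintro y ⟨m, hm, hmy⟩
    have hdiff : -m + y ∈ Λ := QuotientAddGroup.eq.1 hmy
    simpa using M.add_mem hm (hM hdiff)
  have himage : closure (π '' AddSubgroup.closure (M : Set G)) = closure (π '' M) := by
    rw [← AddSubgroup.coe_map, AddMonoidHom.map_closure,
      ← closure_addSubmonoidClosure_eq_closure_addSubgroupClosure, ← AddSubmonoid.coe_map,
      AddSubmonoid.closure_eq]
  have hπx : π x ∈ closure (π '' M) :=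
    himage ▸ image_closure_subset_closure_image QuotientAddGroup.continuous_mk ⟨x, hx, rfl⟩
  rw [← hsaturated]
  exact QuotientAddGroup.isOpenMap_coe.preimage_closure_subset_closure_preimage hπx

end CocompactSubgroup

section LinealitySpace

variable {E : Type*} [AddCommGroup E] [Module ℝ E] {H : AddSubgroup E} {u : E}

/-- The largest real linear subspace contained in an additive subgroup `H` of a real vector
space. -/
def linealitySpace (H : AddSubgroup E) : Submodule ℝ E where
  carrier := {u | ∀ t : ℝ, t • u ∈ H}
  add_mem' ha hb t := by
    rw [smul_add]
    exact H.add_mem (ha t) (hb t)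
  zero_mem' t := by
    rw [smul_zero]
    exact H.zero_mem
  smul_mem' c u hu t := by
    rw [smul_smul]
    exact hu (t * c)

theorem mem_of_mem_linealitySpace (hu : u ∈ linealitySpace H) : u ∈ H := by
  simpa only [one_smul] using hu 1

theorem mem_linealitySpace_of_forall_nonneg (hu : ∀ t : ℝ, 0 ≤ t → t • u ∈ H) :
    u ∈ linealitySpace H := by
  intro t
  rcases le_total 0 t with ht | ht
  · exact hu t ht
  · simpa only [neg_smul, neg_neg] using H.neg_mem (hu (-t) (neg_nonneg.2 ht))

end LinealitySpace

section ClosedSubgroup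

open Filter Topology

variable {E : Type*} [NormedAddCommGroup E] [NormedSpace ℝ E] {H : AddSubgroup E}

theorem mem_linealitySpace_of_tendsto_direction (hH : IsClosed (H : Set E)) {l : Filter E} [NeBot l]
    (hl : l ≤ 𝓝[≠] 0) (hlH : ∀ᶠ h in l, h ∈ H) {e : E} (he : Tendsto (fun h => ‖h‖⁻¹ • h) l (𝓝 e)) :
    e ∈ linealitySpace H := by
  have hnorm : Tendsto (fun h : E => ‖h‖⁻¹) l atTop :=
    tendsto_inv_nhdsGT_zero.comp (tendsto_norm_nhdsNE_zero.mono_left hl)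
  refine mem_linealitySpace_of_forall_nonneg fun t ht => ?_
  -- The multiples `⌊t / ‖h‖⌋ • h ∈ H` of `h` tend to `t • e`.
  refine hH.mem_of_tendsto (((tendsto_nat_floor_mul_div_atTop ht).comp hnorm).smul he) ?_
  filter_upwards [hlH, hl self_mem_nhdsWithin] with h hh hh0
  have hne : ‖h‖⁻¹ ≠ 0 := inv_ne_zero (norm_ne_zero_iff.2 hh0)
  rw [Function.comp_apply, smul_smul, div_mul_cancel₀ _ hne, Nat.cast_smul_eq_nsmul]
  exact H.nsmul_mem hh _

theorem discreteTopology_of_linealitySpace_eq_bot [FiniteDimensional ℝ E]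
    (hH : IsClosed (H : Set E)) (hbot : linealitySpace H = ⊥) : DiscreteTopology H := by
  by_contra hdiscrete
  have : ProperSpace E := FiniteDimensional.proper_real E
  have haccum : NeBot (𝓝[≠] 0 ⊓ 𝓟 (H : Set E)) := by
    refine ⟨fun hisolated => hdiscrete (discreteTopology_of_isOpen_singleton_zero ?_)⟩
    exact (isOpen_singleton_iff_punctured_nhds _).2
      ((nhds_ne_subtype_eq_bot_iff (x := (0 : H))).2 hisolated)
  let l := Ultrafilter.of (𝓝[≠] 0 ⊓ 𝓟 (H : Set E))
  have hl : ↑l ≤ 𝓝[≠] (0 : E) := (Ultrafilter.of_le _).trans inf_le_left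
  have hlH : ∀ᶠ h in l, h ∈ H := le_principal_iff.1 ((Ultrafilter.of_le _).trans inf_le_right)
  have hsphere : ∀ᶠ h in l, ‖h‖⁻¹ • h ∈ Metric.sphere (0 : E) 1 := by
    filter_upwards [hl self_mem_nhdsWithin] with h hh
    simpa using norm_smul_inv_norm (𝕜 := ℝ) hh
  obtain ⟨e, he, hlim⟩ := (isCompact_sphere (0 : E) 1).ultrafilter_le_nhds
    (l.map fun h => ‖h‖⁻¹ • h) (le_principal_iff.2 hsphere)
  have hzero : e ∈ linealitySpace H := mem_linealitySpace_of_tendsto_direction hH hl hlH hlim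
  rw [hbot, Submodule.mem_bot] at hzero
  exact ne_zero_of_mem_unit_sphere ⟨e, he⟩ hzero

theorem discreteTopology_map_mkQ_linealitySpace [FiniteDimensional ℝ E]
    (hH : IsClosed (H : Set E)) :
    DiscreteTopology (H.map (linealitySpace H).mkQ.toAddMonoidHom) := by
  set V := linealitySpace H
  have : IsClosed (V : Set E) := V.closed_of_finiteDimensional
  have hcomap : ∀ x, V.mkQ x ∈ H.map V.mkQ.toAddMonoidHom ↔ x ∈ H := by
    refine fun x => ⟨?_, fun hx => ⟨x, hx, rfl⟩⟩
    rintro ⟨h, hh, hhx⟩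
    have hdiff : h - x ∈ V := (Submodule.Quotient.eq V).1 hhx
    simpa only [sub_sub_cancel] using H.sub_mem hh (mem_of_mem_linealitySpace hdiff)
  refine discreteTopology_of_linealitySpace_eq_bot ?_ ((Submodule.eq_bot_iff _).2 fun y hy => ?_)
  · have hpreimage : V.mkQ ⁻¹' (H.map V.mkQ.toAddMonoidHom) = H := Set.ext hcomap
    rw [← V.isOpenQuotientMap_mkQ.isQuotientMap.isClosed_preimage, hpreimage]
    exact hH
  · obtain ⟨u, rfl⟩ := V.mkQ_surjective y
    refine (Submodule.Quotient.mk_eq_zero V).2 fun t => (hcomap _).1 ?_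
    rw [map_smul]
    exact hy t

end ClosedSubgroup

section RationalSubspace

variable {E F : Type*} [AddCommGroup E] [Module ℝ E] [NormedAddCommGroup F] [NormedSpace ℝ F]
  [FiniteDimensional ℝ F] {Λ : AddSubgroup E} {p : E →ₗ[ℝ] F}

theorem exists_rightInverse_mapsTo_of_discreteTopology_map
    (hΛ : Submodule.span ℝ (Λ : Set E) = ⊤) (hp : Function.Surjective p)
    [DiscreteTopology (Λ.map p.toAddMonoidHom)] :
    ∃ s : F →ₗ[ℝ] E, Function.RightInverse s p ∧ Set.MapsTo s (p '' Λ) Λ := by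
  let L : Submodule ℤ F := (Λ.map p.toAddMonoidHom).toIntSubmodule
  have : DiscreteTopology L := ‹DiscreteTopology (Λ.map p.toAddMonoidHom)›
  have : IsZLattice ℝ L := ⟨by
    rw [show (L : Set F) = p '' Λ from rfl, Submodule.span_image, hΛ, Submodule.map_top,
      LinearMap.range_eq_top.2 hp]⟩
  have : Module.Free ℤ L := ZLattice.module_free ℝ L
  let b := (Module.Free.chooseBasis ℤ L).ofZLatticeBasis ℝ L
  have hb : Submodule.span ℤ (Set.range b) = L := Module.Basis.ofZLatticeBasis_span ℝ L _
  have hlift : ∀ i, ∃ x ∈ Λ, p x = b i := fun i =>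
    hb.le (Submodule.subset_span (Set.mem_range_self i))
  choose lift hlift_mem hp_lift using hlift
  let s : F →ₗ[ℝ] E := b.constr ℝ lift
  have hps : p ∘ₗ s = LinearMap.id := b.ext fun i => by
    simp only [s, LinearMap.comp_apply, Module.Basis.constr_basis, hp_lift, LinearMap.id_apply]
  have hsL : L ≤ Λ.toIntSubmodule.comap (s.restrictScalars ℤ) := by
    rw [← hb, Submodule.span_le]
    rintro _ ⟨i, rfl⟩
    simpa [s] using hlift_mem i
  exact ⟨s, LinearMap.congr_fun hps, fun y hy => hsL hy⟩

theorem span_inter_ker_eq_ker_of_discreteTopology_map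
    (hΛ : Submodule.span ℝ (Λ : Set E) = ⊤) (hp : Function.Surjective p)
    [DiscreteTopology (Λ.map p.toAddMonoidHom)] :
    Submodule.span ℝ ((Λ : Set E) ∩ LinearMap.ker p) = LinearMap.ker p := by
  obtain ⟨s, hps, hs⟩ := exists_rightInverse_mapsTo_of_discreteTopology_map hΛ hp
  let π : E →ₗ[ℝ] E := LinearMap.id - s ∘ₗ p
  have hπΛ : π '' Λ ⊆ (Λ : Set E) ∩ LinearMap.ker p := by
    rintro _ ⟨x, hx, rfl⟩
    exact ⟨Λ.sub_mem hx (hs ⟨x, hx, rfl⟩), by simp [π, hps (p x)]⟩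
  refine le_antisymm (Submodule.span_le.2 Set.inter_subset_right) fun x hx => ?_
  have hπx : π x = x := by simp [π, LinearMap.mem_ker.1 hx]
  have hπ_span : π x ∈ Submodule.span ℝ (π '' Λ) := by
    rw [Submodule.span_image, hΛ]
    exact Submodule.mem_map_of_mem Submodule.mem_top
  exact Submodule.span_mono hπΛ (hπx ▸ hπ_span)

theorem span_inter_linealitySpace_eq_linealitySpace {E : Type*} [NormedAddCommGroup E]
    [NormedSpace ℝ E] [FiniteDimensional ℝ E] {Λ H : AddSubgroup E}
    (hΛ : Submodule.span ℝ (Λ : Set E) = ⊤) (hH : IsClosed (H : Set E)) (hΛH : Λ ≤ H) :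
    Submodule.span ℝ ((Λ : Set E) ∩ linealitySpace H) = linealitySpace H := by
  set V := linealitySpace H
  have : IsClosed (V : Set E) := V.closed_of_finiteDimensional
  have hdiscrete : DiscreteTopology (H.map V.mkQ.toAddMonoidHom) :=
    discreteTopology_map_mkQ_linealitySpace hH
  have : DiscreteTopology (Λ.map V.mkQ.toAddMonoidHom) :=
    hdiscrete.of_subset (AddSubgroup.map_mono hΛH)
  simpa only [Submodule.ker_mkQ] using
    span_inter_ker_eq_ker_of_discreteTopology_map hΛ V.mkQ_surjective

end RationalSubspace

section RecessionCone

/-- The recession cone of a set, as an additive submonoid. -/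
def recessionCone {E : Type*} [AddCommMonoid E] (K : Set E) : AddSubmonoid E where
  carrier := {u | ∀ x ∈ K, x + u ∈ K}
  add_mem' ha hb x hx := by
    rw [← add_assoc]
    exact hb _ (ha x hx)
  zero_mem' x hx := by rwa [add_zero]

variable {E : Type*} [AddCommGroup E] {K : Set E} {u x : E}

theorem add_mem_interior_of_mem_recessionCone [TopologicalSpace E] [ContinuousAdd E]
    (hu : u ∈ recessionCone K) (hx : x ∈ interior K) : x + u ∈ interior K :=
  (Homeomorph.addRight u).isOpenMap.mapsTo_interior (fun y hy => hu y hy) hx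

theorem smul_mem_recessionCone [Module ℝ E] (hK : Convex ℝ K) (hu : u ∈ recessionCone K) {t : ℝ}
    (ht : 0 ≤ t) : t • u ∈ recessionCone K := by
  intro x hx
  obtain ⟨n, hn⟩ := exists_nat_gt t
  have hn0 : (0 : ℝ) < n := ht.trans_lt hn
  have hxn : x + (n : ℝ) • u ∈ K := by
    rw [Nat.cast_smul_eq_nsmul]
    exact (recessionCone K).nsmul_mem hu n x hx
  have hsegment := hK.add_smul_mem hx hxn ⟨div_nonneg ht hn0.le, (div_le_one hn0).2 hn.le⟩
  rwa [smul_smul, div_mul_cancel₀ _ hn0.ne'] at hsegment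

end RecessionCone

section SFree

/-- A closed convex set is `S`-free if its interior contains no point of `S`; lattice-free sets are
the case in which `S` is a lattice. -/
structure IsSFree {E : Type*} [AddCommGroup E] [Module ℝ E] [TopologicalSpace E] (S K : Set E) :
    Prop where
  isClosed : IsClosed K
  convex : Convex ℝ K
  disjoint_interior : Disjoint (interior K) S

variable {E : Type*} [AddCommGroup E] [Module ℝ E] [TopologicalSpace E] [IsTopologicalAddGroup E]
  [ContinuousSMul ℝ E] {S K : Set E}

theorem isSFree_closure_interior_add (hK : Convex ℝ K) (hne : (interior K).Nonempty)
    {V : Submodule ℝ E} (hV : Disjoint (interior K + (V : Set E)) S) :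
    IsSFree S (closure (interior K + (V : Set E))) := by
  have hopen : IsOpen (interior K + (V : Set E)) := isOpen_interior.add_right
  have hconvex : Convex ℝ (interior K + (V : Set E)) := hK.interior.add V.convex
  have hnonempty : (interior (interior K + (V : Set E))).Nonempty := by
    rw [hopen.interior_eq]
    exact hne.add ⟨0, V.zero_mem⟩
  refine ⟨isClosed_closure, hconvex.closure, ?_⟩
  rwa [hconvex.interior_closure_eq_interior_of_nonempty_interior hnonempty, hopen.interior_eq]

theorem subset_recessionCone_of_disjoint (hK : Maximal (IsSFree S) K) (hne : (interior K).Nonempty)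
    {V : Submodule ℝ E} (hV : Disjoint (interior K + (V : Set E)) S) :
    (V : Set E) ⊆ recessionCone K := by
  set C := interior K + (V : Set E)
  have hKC : K ⊆ closure C := by
    rw [← hK.prop.isClosed.closure_eq,
      ← hK.prop.convex.closure_interior_eq_closure_of_nonempty_interior hne]
    exact closure_mono (Set.subset_add_left _ V.zero_mem)
  have hcylinder : K = closure C :=
    hK.eq_of_subset (isSFree_closure_interior_add hK.prop.convex hne hV) hKC
  intro v hv x hx
  rw [hcylinder] at hx ⊢
  refine map_mem_closure (f := (· + v)) (by fun_prop) hx ?_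
  rintro _ ⟨y, hy, w, hw, rfl⟩
  exact ⟨y, hy, w + v, V.add_mem hw hv, (add_assoc y w v).symm⟩

end SFree

section LatticeRecessionGroup

variable {E : Type*} [AddCommGroup E] [TopologicalSpace E] [IsTopologicalAddGroup E]
  {Λ : AddSubgroup E} {K : Set E}

/-- The closed subgroup generated by `Λ` and the recession cone of `K`; its largest linear subspace
turns out to be the recession cone when `K` is a full-dimensional maximal `Λ`-free set. -/
def latticeRecessionGroup (Λ : AddSubgroup E) (K : Set E) : AddSubgroup E :=
  (Λ ⊔ AddSubgroup.closure (recessionCone K)).topologicalClosure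

theorem isClosed_latticeRecessionGroup : IsClosed (latticeRecessionGroup Λ K : Set E) :=
  AddSubgroup.isClosed_topologicalClosure _

theorem le_latticeRecessionGroup : Λ ≤ latticeRecessionGroup Λ K :=
  le_sup_left.trans (AddSubgroup.le_topologicalClosure _)

theorem recessionCone_subset_latticeRecessionGroup :
    (recessionCone K : Set E) ⊆ latticeRecessionGroup Λ K := fun _ hu =>
  AddSubgroup.le_topologicalClosure _
    (AddSubgroup.mem_sup_right (AddSubgroup.subset_closure hu))

theorem disjoint_interior_latticeRecessionGroup [CompactSpace (E ⧸ Λ)]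
    (hK : Disjoint (interior K) (Λ : Set E)) :
    Disjoint (interior K) (latticeRecessionGroup Λ K : Set E) := by
  let M : AddSubmonoid E := Λ.toAddSubmonoid ⊔ -recessionCone K
  have hM : Disjoint (interior K) (M : Set E) := by
    refine Set.disjoint_left.2 fun x hx hxM => ?_
    obtain ⟨z, hz, u, hu, rfl⟩ := AddSubmonoid.mem_sup.1 hxM
    have hz_int := add_mem_interior_of_mem_recessionCone (AddSubmonoid.mem_neg.1 hu) hx
    rw [add_neg_cancel_right] at hz_int
    exact Set.disjoint_left.1 hK hz_int hz
  have hle : Λ ⊔ AddSubgroup.closure (recessionCone K) ≤ AddSubgroup.closure (M : Set E) := by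
    refine sup_le (fun z hz => AddSubgroup.subset_closure (AddSubmonoid.mem_sup_left hz))
      ((AddSubgroup.closure_le _).2 fun u hu => ?_)
    rw [SetLike.mem_coe, ← neg_mem_iff]
    exact AddSubgroup.subset_closure (AddSubmonoid.mem_sup_right (by simpa using hu))
  refine (hM.closure_right isOpen_interior).mono_right ?_
  rw [← closure_addSubgroupClosure_eq_of_compactSpace_quotient (Λ := Λ) le_sup_left]
  exact closure_mono hle

end LatticeRecessionGroup

section MaximalLatticeFree

variable {E : Type*} [NormedAddCommGroup E] [NormedSpace ℝ E] [FiniteDimensional ℝ E]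
  {Λ : AddSubgroup E} {K : Set E}

theorem recessionCone_eq_linealitySpace (hΛ : Submodule.span ℝ (Λ : Set E) = ⊤)
    (hK : Maximal (IsSFree (Λ : Set E)) K) (hne : (interior K).Nonempty) :
    (recessionCone K : Set E) = linealitySpace (latticeRecessionGroup Λ K) := by
  have : CompactSpace (E ⧸ Λ) := compactSpace_quotient_of_span_eq_top hΛ
  refine subset_antisymm (fun u hu => ?_) (subset_recessionCone_of_disjoint hK hne ?_)
  · exact mem_linealitySpace_of_forall_nonneg fun t ht =>
      recessionCone_subset_latticeRecessionGroup (smul_mem_recessionCone hK.prop.convex hu ht)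
  · refine Set.disjoint_left.2 ?_
    rintro _ ⟨x, hx, v, hv, rfl⟩ hxv
    refine Set.disjoint_left.1
      (disjoint_interior_latticeRecessionGroup hK.prop.disjoint_interior) hx ?_
    rw [← add_sub_cancel_right x v]
    exact AddSubgroup.sub_mem _ (le_latticeRecessionGroup hxv) (mem_of_mem_linealitySpace hv)

theorem stmt_1_general {r : ℕ} (hΛ : Submodule.span ℝ (Λ : Set E) = ⊤)
    (hK : Maximal (IsSFree (Λ : Set E)) K) (hdim : affineSpan ℝ K = ⊤)
    (hr : Module.finrank ℝ (Submodule.span ℝ (recessionCone K : Set E)) = r) :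
    ∃ v : Fin r → E, (∀ i, v i ∈ Λ) ∧
      (recessionCone K : Set E) = Submodule.span ℝ (Set.range v) := by
  have hne : (interior K).Nonempty :=
    hK.prop.convex.interior_nonempty_iff_affineSpan_eq_top.2 hdim
  have hcone := recessionCone_eq_linealitySpace hΛ hK hne
  have hspan := span_inter_linealitySpace_eq_linealitySpace hΛ
    isClosed_latticeRecessionGroup (le_latticeRecessionGroup (K := K))
  obtain ⟨v, hv, hv_span, -⟩ := Submodule.exists_fun_fin_finrank_span_eq ℝ
    ((Λ : Set E) ∩ linealitySpace (latticeRecessionGroup Λ K))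
  rw [hcone, Submodule.span_eq, ← hspan] at hr
  subst hr
  exact ⟨v, fun i => (hv i).1, hcone.trans (congrArg SetLike.coe (hspan.symm.trans hv_span.symm))⟩

end MaximalLatticeFree

section IntegerLattice

/-- The lattice `ℤ^d` as an additive subgroup of `ℝ^d`. -/
def intAddSubgroup (d : ℕ) : AddSubgroup (Fin d → ℝ) :=
  ((Int.castAddHom ℝ).compLeft (Fin d)).range

theorem span_intAddSubgroup (d : ℕ) :
    Submodule.span ℝ (intAddSubgroup d : Set (Fin d → ℝ)) = ⊤ := by
  rw [eq_top_iff, ← (Pi.basisFun ℝ (Fin d)).span_eq]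
  refine Submodule.span_mono ?_
  rintro _ ⟨i, rfl⟩
  refine ⟨Pi.single i 1, funext fun j => ?_⟩
  simp [Pi.single_apply]

theorem IsMaxLatticeFree.maximal_isSFree {d : ℕ} {K : Set (Fin d → ℝ)} (hK : IsMaxLatticeFree d K) :
    Maximal (IsSFree (intAddSubgroup d : Set (Fin d → ℝ))) K := by
  obtain ⟨⟨hclosed, hconvex, hfree⟩, hmax⟩ := hK
  refine ⟨⟨hclosed, hconvex, Set.disjoint_iff_inter_eq_empty.2 hfree⟩, fun K' hK' hle => ?_⟩
  exact (hmax K' ⟨hK'.isClosed, hK'.convex, hK'.disjoint_interior.inter_eq⟩ hle).le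

end IntegerLattice

/-- The recession cone of a `d`-dimensional maximal lattice-free
set is a linear subspace spanned by `r` vectors from `ℤ^d`, where `r` is its
dimension. -/
theorem stmt_1 (d r : ℕ) (K : Set (Fin d → ℝ))
    (hK : IsMaxLatticeFree d K) (hdim : affineSpan ℝ K = ⊤)
    (hr : Module.finrank ℝ (Submodule.span ℝ (recCone d K)) = r) :
    ∃ v : Fin r → (Fin d → ℤ),
      recCone d K =
        (Submodule.span ℝ (Set.range fun i => fun j => ((v i j : ℤ) : ℝ)) :
          Set (Fin d → ℝ)) := by
  obtain ⟨v, hv, hspan⟩ := stmt_1_general (span_intAddSubgroup d) hK.maximal_isSFree hdim hr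
  choose w hw using hv
  obtain rfl : (fun i j => (w i j : ℝ)) = v := funext hw
  exact ⟨w, hspan⟩
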